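/- For every analytic set A ⊆ [0,1] there exists a continuous function F : [0,1] → [0,1] with F(0) = 0 and F(1) = 1 such that F⁻¹(y) has cardinality 𝔠 for every y ∈ A, and F⁻¹(y) is countably infinite for every y ∈ [0,1] \ A. -/

import Mathlib

open Set Cardinal

noncomputable section

/-- The section of `F` over `y`: the set of `x ∈ [0,1]` with `F x = y`. -/
def Sec (F : ℝ → ℝ) (y : ℝ) : Set ℝ := {x | x ∈ Set.Icc (0:ℝ) 1 ∧ F x = y}

/-!
An analytic set is a continuous image of Baire space, and Baire space is a continuous image of the
co-countable set of binary sequences with infinitely many ones, via the lengths of the runs of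
zeros. Composing gives a continuous map on that co-countable set, which can be arranged to have
fibres of size `𝔠` over `A`. The closure of its graph contains no new point above the domain, so
each fibre gains only countably many points. Adding all monotone binary sequences to every fibre
makes the fibres infinite without making any countable one uncountable.

Replacing `y` by its binary expansions, of which there are only countably many, turns this closed
set into a closed subset `K` of the Cantor set on which recovering `y` is a continuous function. It
is extended to `[0, 1]` by a non-constant polynomial on each complementary interval of `K`, so that
each level set gains only countably many points. The extension is continuous at `x ∈ K` because a
bound `ε + C * dist z x` on the oscillation, once valid at the ends of a complementary interval, is
inherited by linear interpolation.
-/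

open Filter Topology Polynomial AffineMap Real

section AffineMajorant

variable {α β : Type*} [PseudoMetricSpace α] [PseudoMetricSpace β] {f : α → β} {s : Set α} {x : α}

lemma exists_dist_le_add_mul_dist (hf : ContinuousWithinAt f s x) (hx : x ∈ s)
    (hb : Bornology.IsBounded (f '' s)) {ε : ℝ} (hε : 0 < ε) :
    ∃ C, ∀ t ∈ s, dist (f t) (f x) ≤ ε + C * dist t x := by
  obtain ⟨δ, hδ, hclose⟩ := Metric.continuousWithinAt_iff.1 hf ε hε
  refine ⟨Metric.diam (f '' s) / δ, fun t ht => ?_⟩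
  rcases lt_or_ge (dist t x) δ with hnear | hfar
  · have : 0 ≤ Metric.diam (f '' s) / δ * dist t x := by positivity
    linarith [hclose ht hnear]
  · calc dist (f t) (f x)
        ≤ Metric.diam (f '' s) :=
          Metric.dist_le_diam_of_mem hb (mem_image_of_mem f ht) (mem_image_of_mem f hx)
      _ = Metric.diam (f '' s) / δ * δ := by field_simp
      _ ≤ Metric.diam (f '' s) / δ * dist t x := by gcongr
      _ ≤ ε + Metric.diam (f '' s) / δ * dist t x := by linarith

lemma continuousWithinAt_of_dist_le_add_mul_dist
    (h : ∀ ε > 0, ∃ C, ∀ t ∈ s, dist (f t) (f x) ≤ ε + C * dist t x) :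
    ContinuousWithinAt f s x := by
  refine Metric.tendsto_nhds.2 fun ε hε => ?_
  obtain ⟨C, hC⟩ := h (ε / 2) (half_pos hε)
  have hlim : Tendsto (fun t => ε / 2 + C * dist t x) (𝓝[s] x) (𝓝 (ε / 2)) := by
    have : Continuous fun t => ε / 2 + C * dist t x := by fun_prop
    simpa using (this.tendsto x).mono_left nhdsWithin_le_nhds
  filter_upwards [hlim.eventually_lt_const (half_lt_self hε), self_mem_nhdsWithin] with t hlt ht
  exact (hC t ht).trans_lt hlt

end AffineMajorant

section Gap

variable {α : Type*} [ConditionallyCompleteLinearOrder α] {K : Set α} {a b x z : α}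

/-- The left end of the complementary interval of the closed set `K` around `x`; it is `x` itself
when `x ∈ K`. -/
def gapLeft (K : Set α) (x : α) : α := sSup (K ∩ Iic x)

/-- The right end of the complementary interval of the closed set `K` around `x`; it is `x` itself
when `x ∈ K`. -/
def gapRight (K : Set α) (x : α) : α := sInf (K ∩ Ici x)

lemma gapLeft_eq_self (hx : x ∈ K) : gapLeft K x = x :=
  IsGreatest.csSup_eq ⟨⟨hx, le_rfl⟩, fun _ ht => ht.2⟩

lemma gapLeft_eq_of_mem_Ioo (ha : a ∈ K) (hgap : Disjoint (Ioo a b) K) (hz : z ∈ Ioo a b) :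
    gapLeft K z = a :=
  IsGreatest.csSup_eq ⟨⟨ha, hz.1.le⟩, fun _ ht => not_lt.1 fun hat =>
    disjoint_left.1 hgap ⟨hat, ht.2.trans_lt hz.2⟩ ht.1⟩

lemma gapRight_eq_of_mem_Ioo (hb : b ∈ K) (hgap : Disjoint (Ioo a b) K) (hz : z ∈ Ioo a b) :
    gapRight K z = b :=
  IsLeast.csInf_eq ⟨⟨hb, hz.2.le⟩, fun _ ht => not_lt.1 fun htb =>
    disjoint_left.1 hgap ⟨hz.1.trans_le ht.2, htb⟩ ht.1⟩

lemma le_gapLeft (ha : a ∈ K) (hax : a ≤ x) : a ≤ gapLeft K x :=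
  le_csSup ⟨x, fun _ ht => ht.2⟩ ⟨ha, hax⟩

lemma gapRight_le (hb : b ∈ K) (hxb : x ≤ b) : gapRight K x ≤ b :=
  csInf_le ⟨x, fun _ ht => ht.2⟩ ⟨hb, hxb⟩

lemma disjoint_Ioo_gapLeft_gapRight : Disjoint (Ioo (gapLeft K x) (gapRight K x)) K := by
  refine disjoint_left.2 fun t ht htK => ?_
  rcases le_total t x with htx | hxt
  · exact ht.1.not_ge (le_gapLeft htK htx)
  · exact ht.2.not_ge (gapRight_le htK hxt)

variable [TopologicalSpace α] [OrderTopology α]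

lemma gapLeft_mem_inter_Iic (hK : IsClosed K) (ha : a ∈ K) (hax : a ≤ x) :
    gapLeft K x ∈ K ∩ Iic x :=
  (hK.inter isClosed_Iic).csSup_mem ⟨a, ha, hax⟩ ⟨x, fun _ ht => ht.2⟩

lemma gapRight_mem_inter_Ici (hK : IsClosed K) (hb : b ∈ K) (hxb : x ≤ b) :
    gapRight K x ∈ K ∩ Ici x :=
  (hK.inter isClosed_Ici).csInf_mem ⟨b, hb, hxb⟩ ⟨x, fun _ ht => ht.2⟩

lemma mem_Ioo_gapLeft_gapRight (hK : IsClosed K) (ha : a ∈ K) (hb : b ∈ K) (hx : x ∈ Icc a b)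
    (hxK : x ∉ K) : x ∈ Ioo (gapLeft K x) (gapRight K x) := by
  obtain ⟨hleft, hle⟩ := gapLeft_mem_inter_Iic hK ha hx.1
  obtain ⟨hright, hge⟩ := gapRight_mem_inter_Ici hK hb hx.2
  exact ⟨hle.lt_of_ne (ne_of_mem_of_not_mem hleft hxK),
    hge.lt_of_ne (ne_of_mem_of_not_mem hright hxK).symm⟩

end Gap

section GapPolynomial

/-- An endpoint of `[0, 1]` different from `A`. -/
def farEndpoint (A : ℝ) : ℝ := if A = 0 then 1 else 0

lemma farEndpoint_mem_Icc (A : ℝ) : farEndpoint A ∈ Icc (0 : ℝ) 1 := by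
  rw [farEndpoint]
  split_ifs <;> simp

lemma farEndpoint_ne (A : ℝ) : farEndpoint A ≠ A := by
  rw [farEndpoint]
  split_ifs with h
  · simp [h]
  · exact Ne.symm h

/-- For `a < b`, a non-constant polynomial with values `A` at `a` and `B` at `b`, filling the gap
between them: the linear interpolation, pushed towards `farEndpoint A` with the weight
`(X - a) * (b - X)`, which vanishes at both ends and, when `b - a ≤ 1`, lies in `[0, 1]` in
between. -/
def gapPolynomial (a b A B : ℝ) : ℝ[X] :=
  let L := C A + C ((B - A) / (b - a)) * (X - C a)
  L + (X - C a) * (C b - X) * (C (farEndpoint A) - L)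

variable {a b A B x y z ε M : ℝ}

lemma eval_gapPolynomial : (gapPolynomial a b A B).eval z =
    lineMap (lineMap A B ((z - a) / (b - a))) (farEndpoint A) ((z - a) * (b - z)) := by
  simp only [gapPolynomial, lineMap_apply_ring', eval_add, eval_sub, eval_mul, eval_C, eval_X]
  ring

lemma eval_gapPolynomial_left : (gapPolynomial a b A B).eval a = A := by
  simp [eval_gapPolynomial]

lemma eval_gapPolynomial_right (hab : a < b) : (gapPolynomial a b A B).eval b = B := by
  simp [eval_gapPolynomial, div_self (sub_ne_zero.2 hab.ne')]

lemma natDegree_gapPolynomial_ne_zero (hab : a < b) : (gapPolynomial a b A B).natDegree ≠ 0 := by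
  intro hdeg
  obtain ⟨c, hc⟩ := natDegree_eq_zero.1 hdeg
  have heval : ∀ z, (gapPolynomial a b A B).eval z = c := fun z => by rw [← hc, eval_C]
  obtain rfl : A = c := eval_gapPolynomial_left.symm.trans (heval a)
  obtain rfl : B = A := (eval_gapPolynomial_right hab).symm.trans (heval b)
  have hmid := heval ((a + b) / 2)
  rw [eval_gapPolynomial, lineMap_same_apply, lineMap_eq_left_iff] at hmid
  rcases hmid with hval | hweight
  · exact farEndpoint_ne _ hval.symm
  · exact (mul_pos (by linarith) (by linarith) :
      0 < ((a + b) / 2 - a) * (b - (a + b) / 2)).ne' hweight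

lemma div_sub_mem_Icc_zero_one (hz : z ∈ Icc a b) : (z - a) / (b - a) ∈ Icc (0 : ℝ) 1 :=
  ⟨div_nonneg (sub_nonneg.2 hz.1) (sub_nonneg.2 (hz.1.trans hz.2)),
    div_le_one_of_le₀ (sub_le_sub_right hz.2 a) (sub_nonneg.2 (hz.1.trans hz.2))⟩

lemma eval_gapPolynomial_mem_Icc (hab : b - a ≤ 1) (hz : z ∈ Icc a b)
    (hA : A ∈ Icc (0 : ℝ) 1) (hB : B ∈ Icc (0 : ℝ) 1) :
    (gapPolynomial a b A B).eval z ∈ Icc (0 : ℝ) 1 := by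
  have hweight : (z - a) * (b - z) ∈ Icc (0 : ℝ) 1 :=
    unitInterval.mul_mem ⟨sub_nonneg.2 hz.1, by linarith [hz.2]⟩
      ⟨sub_nonneg.2 hz.2, by linarith [hz.1]⟩
  rw [eval_gapPolynomial]
  exact (convex_Icc 0 1).lineMap_mem
    ((convex_Icc 0 1).lineMap_mem hA hB (div_sub_mem_Icc_zero_one hz))
    (farEndpoint_mem_Icc A) hweight

lemma dist_lineMap_le_add_mul_dist {E : Type*} [SeminormedAddCommGroup E] [NormedSpace ℝ E]
    {p q r : E} (hab : a < b) (hz : z ∈ Icc a b) (hx : x ∉ Ioo a b)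
    (hp : dist p r ≤ ε + M * dist a x) (hq : dist q r ≤ ε + M * dist b x) :
    dist (lineMap p q ((z - a) / (b - a))) r ≤ ε + M * dist z x := by
  obtain ⟨hθ₀, hθ₁⟩ := div_sub_mem_Icc_zero_one hz
  have hdist : (1 - (z - a) / (b - a)) * dist a x + (z - a) / (b - a) * dist b x = dist z x := by
    have hne : b - a ≠ 0 := (sub_pos.2 hab).ne'
    simp only [Real.dist_eq]
    rcases le_or_gt x a with hxa | hax
    · rw [abs_of_nonneg (by linarith), abs_of_nonneg (by linarith),
        abs_of_nonneg (by linarith [hz.1])]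
      field
    · have hbx : b ≤ x := not_lt.1 fun hxb => hx ⟨hax, hxb⟩
      rw [abs_of_nonpos (by linarith), abs_of_nonpos (by linarith),
        abs_of_nonpos (by linarith [hz.2])]
      field
  set θ := (z - a) / (b - a)
  calc dist (lineMap p q θ) r
      ≤ (1 - θ) * dist p r + θ * dist q r := by
        rw [lineMap_apply_module]
        exact (convexOn_univ_dist r).2 (mem_univ p) (mem_univ q) (sub_nonneg.2 hθ₁) hθ₀
          (sub_add_cancel 1 θ)
    _ ≤ (1 - θ) * (ε + M * dist a x) + θ * (ε + M * dist b x) := by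
        gcongr
    _ = ε + M * dist z x := by rw [← hdist]; ring

lemma sub_mul_sub_le_dist (hab : b - a ≤ 1) (hz : z ∈ Icc a b) (hx : x ∉ Ioo a b) :
    (z - a) * (b - z) ≤ dist z x := by
  obtain ⟨haz, hzb⟩ := hz
  rw [Real.dist_eq]
  rcases le_or_gt x a with hxa | hax
  · nlinarith [le_abs_self (z - x)]
  · have hbx : b ≤ x := not_lt.1 fun hxb => hx ⟨hax, hxb⟩
    nlinarith [neg_le_abs (z - x)]

lemma dist_eval_gapPolynomial_le (hab : a < b) (hba : b - a ≤ 1) (hz : z ∈ Icc a b)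
    (hx : x ∉ Ioo a b) (hA : A ∈ Icc (0 : ℝ) 1) (hB : B ∈ Icc (0 : ℝ) 1)
    (hAy : dist A y ≤ ε + M * dist a x) (hBy : dist B y ≤ ε + M * dist b x) :
    dist ((gapPolynomial a b A B).eval z) y ≤ ε + (M + 1) * dist z x := by
  rw [eval_gapPolynomial]
  set L := lineMap A B ((z - a) / (b - a))
  set c := farEndpoint A
  have hLc : dist L c ≤ 1 := by
    simpa using Real.dist_le_of_mem_Icc
      ((convex_Icc 0 1).lineMap_mem hA hB (div_sub_mem_Icc_zero_one hz))
      (farEndpoint_mem_Icc A)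
  have hweight : 0 ≤ (z - a) * (b - z) := mul_nonneg (sub_nonneg.2 hz.1) (sub_nonneg.2 hz.2)
  calc dist (lineMap L c ((z - a) * (b - z))) y
      ≤ dist (lineMap L c ((z - a) * (b - z))) L + dist L y := dist_triangle _ _ _
    _ ≤ dist z x + (ε + M * dist z x) := by
        gcongr
        · rw [dist_lineMap_left, Real.norm_of_nonneg hweight]
          exact (mul_le_of_le_one_right hweight hLc).trans (sub_mul_sub_le_dist hba hz hx)
        · exact dist_lineMap_le_add_mul_dist hab hz hx hAy hBy
    _ = ε + (M + 1) * dist z x := by ring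

end GapPolynomial

section GapExtension

lemma countable_fiber_of_eventuallyEq_eval {s : Set ℝ} {f : ℝ → ℝ}
    (h : ∀ x ∈ s, ∃ p : ℝ[X], p.natDegree ≠ 0 ∧ f =ᶠ[𝓝 x] fun z => p.eval z) (y : ℝ) :
    (s ∩ f ⁻¹' {y}).Countable := by
  choose! p hdeg hp using h
  obtain ⟨t, hts, ht, hcover⟩ := TopologicalSpace.countable_cover_nhdsWithin
    (f := fun x => {z | f z = (p x).eval z}) fun x hx => mem_nhdsWithin_of_mem_nhds (hp x hx)
  have hfinite : ∀ x ∈ t, {z | (p x).eval z = y}.Finite := fun x hx => by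
    have hne : p x - C y ≠ 0 := fun h0 => hdeg x (hts hx) <| by
      rw [sub_eq_zero.1 h0, natDegree_C]
    simpa [IsRoot, sub_eq_zero] using finite_setOfPred_isRoot hne
  refine (ht.biUnion fun x hx => (hfinite x hx).countable).mono fun z ⟨hzs, hzy⟩ => ?_
  obtain ⟨x, hx, hzx⟩ := mem_iUnion₂.1 (hcover hzs)
  exact mem_biUnion hx (hzx.symm.trans hzy)

/-- The extension of `g` from the closed set `K` to the gaps of `K` by `gapPolynomial`. On `K`
itself the gap degenerates to a point, where `gapPolynomial` takes the value of `g`. -/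
def gapExtension (K : Set ℝ) (g : ℝ → ℝ) (x : ℝ) : ℝ :=
  (gapPolynomial (gapLeft K x) (gapRight K x) (g (gapLeft K x)) (g (gapRight K x))).eval x

variable {K : Set ℝ} {g : ℝ → ℝ} {x y : ℝ}

lemma gapExtension_of_mem (hx : x ∈ K) : gapExtension K g x = g x := by
  rw [gapExtension, gapLeft_eq_self hx, eval_gapPolynomial_left]

lemma gapRight_sub_gapLeft_le_one (h₀ : 0 ∈ K) (h₁ : 1 ∈ K) (hx : x ∈ Icc (0 : ℝ) 1) :
    gapRight K x - gapLeft K x ≤ 1 := by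
  linarith [le_gapLeft h₀ hx.1, gapRight_le h₁ hx.2]

lemma exists_gapExtension_eventuallyEq_eval (hK : IsClosed K) (h₀ : 0 ∈ K) (h₁ : 1 ∈ K)
    (hx : x ∈ Icc 0 1 \ K) :
    ∃ p : ℝ[X], p.natDegree ≠ 0 ∧ gapExtension K g =ᶠ[𝓝 x] fun z => p.eval z := by
  have hmem := mem_Ioo_gapLeft_gapRight hK h₀ h₁ hx.1 hx.2
  refine ⟨gapPolynomial _ _ (g (gapLeft K x)) (g (gapRight K x)),
    natDegree_gapPolynomial_ne_zero (hmem.1.trans hmem.2), ?_⟩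
  filter_upwards [Ioo_mem_nhds hmem.1 hmem.2] with z hz
  have hleft := (gapLeft_mem_inter_Iic hK h₀ hx.1.1).1
  have hright := (gapRight_mem_inter_Ici hK h₁ hx.1.2).1
  rw [gapExtension, gapLeft_eq_of_mem_Ioo hleft disjoint_Ioo_gapLeft_gapRight hz,
    gapRight_eq_of_mem_Ioo hright disjoint_Ioo_gapLeft_gapRight hz]

lemma mapsTo_gapExtension (hK : IsClosed K) (h₀ : 0 ∈ K) (h₁ : 1 ∈ K)
    (hgK : MapsTo g K (Icc 0 1)) : MapsTo (gapExtension K g) (Icc 0 1) (Icc 0 1) := by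
  intro x hx
  obtain ⟨hleft, hle⟩ := gapLeft_mem_inter_Iic hK h₀ hx.1
  obtain ⟨hright, hge⟩ := gapRight_mem_inter_Ici hK h₁ hx.2
  exact eval_gapPolynomial_mem_Icc (gapRight_sub_gapLeft_le_one h₀ h₁ hx) ⟨hle, hge⟩
    (hgK hleft) (hgK hright)

lemma continuousOn_gapExtension (hK : IsClosed K) (h₀ : 0 ∈ K) (h₁ : 1 ∈ K)
    (hg : ContinuousOn g K) (hgK : MapsTo g K (Icc 0 1)) :
    ContinuousOn (gapExtension K g) (Icc 0 1) := by
  intro x hx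
  by_cases hxK : x ∈ K
  · refine continuousWithinAt_of_dist_le_add_mul_dist fun ε hε => ?_
    have hbounded := (Metric.isBounded_Icc (0 : ℝ) 1).subset hgK.image_subset
    obtain ⟨M, hM⟩ := exists_dist_le_add_mul_dist (hg x hxK) hxK hbounded hε
    refine ⟨M + 1, fun z hz => ?_⟩
    rw [gapExtension_of_mem hxK]
    by_cases hzK : z ∈ K
    · rw [gapExtension_of_mem hzK]
      linarith [hM z hzK, dist_nonneg (x := z) (y := x)]
    · have hzgap := mem_Ioo_gapLeft_gapRight hK h₀ h₁ hz hzK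
      have hleft := (gapLeft_mem_inter_Iic hK h₀ hz.1).1
      have hright := (gapRight_mem_inter_Ici hK h₁ hz.2).1
      exact dist_eval_gapPolynomial_le (hzgap.1.trans hzgap.2)
        (gapRight_sub_gapLeft_le_one h₀ h₁ hz) (Ioo_subset_Icc_self hzgap)
        (disjoint_right.1 disjoint_Ioo_gapLeft_gapRight hxK) (hgK hleft) (hgK hright)
        (hM _ hleft) (hM _ hright)
  · obtain ⟨p, -, hp⟩ := exists_gapExtension_eventuallyEq_eval (g := g) hK h₀ h₁ ⟨hx, hxK⟩
    exact (p.continuous.continuousAt.congr hp.symm).continuousWithinAt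

lemma inter_preimage_subset_Sec_gapExtension (hKI : K ⊆ Icc 0 1) :
    K ∩ g ⁻¹' {y} ⊆ Sec (gapExtension K g) y :=
  fun _ hx => ⟨hKI hx.1, (gapExtension_of_mem hx.1).trans hx.2⟩

lemma countable_Sec_gapExtension (hK : IsClosed K) (h₀ : 0 ∈ K) (h₁ : 1 ∈ K)
    (hy : (K ∩ g ⁻¹' {y}).Countable) : (Sec (gapExtension K g) y).Countable := by
  have hgaps : (Icc 0 1 \ K ∩ gapExtension K g ⁻¹' {y}).Countable :=
    countable_fiber_of_eventuallyEq_eval (fun _ => exists_gapExtension_eventuallyEq_eval hK h₀ h₁) y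
  refine (hy.union hgaps).mono fun x ⟨hx, hxy⟩ => ?_
  by_cases hxK : x ∈ K
  · exact Or.inl ⟨hxK, (gapExtension_of_mem hxK).symm.trans hxy⟩
  · exact Or.inr ⟨⟨hx, hxK⟩, hxy⟩

end GapExtension

section EventuallyConstant

lemma countable_setOf_eventually_cofinite_eq {ι α : Type*} [Countable ι] [Countable α] (c : α) :
    {v : ι → α | ∀ᶠ i in cofinite, v i = c}.Countable := by
  let : Zero α := ⟨c⟩
  exact (countable_range fun w : ι →₀ α => (w : ι → α)).mono
    fun v hv => mem_range.2 ⟨Finsupp.ofSupportFinite v hv, rfl⟩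

lemma countable_setOf_eventually_atTop_eq {α : Type*} [Countable α] (c : α) :
    {v : ℕ → α | ∀ᶠ i in atTop, v i = c}.Countable := by
  simpa only [← Nat.cofinite_eq_atTop] using countable_setOf_eventually_cofinite_eq c

lemma countable_setOf_monotone {α : Type*} [PartialOrder α] [Finite α] :
    {v : ℕ → α | Monotone v}.Countable := by
  refine (countable_iUnion countable_setOf_eventually_atTop_eq).mono fun v hv => mem_iUnion.2 ?_
  have : Nonempty α := ⟨v 0⟩
  refine eventuallyConst_iff_exists_eventuallyEq.1 (.of_monotone_of_lt_cof hv ?_)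
  simp

lemma infinite_setOf_monotone {α : Type*} [PartialOrder α] [BoundedOrder α] [Nontrivial α] :
    {v : ℕ → α | Monotone v}.Infinite := by
  let step : ℕ → ℕ → α := fun n i => if n ≤ i then ⊤ else ⊥
  have hstep : Function.Injective step := fun m n h => le_antisymm
    (by simpa [step] using congrFun h n) (by simpa [step] using congrFun h m)
  refine (infinite_range_of_injective hstep).mono (range_subset_iff.2 fun n i j hij => ?_)
  by_cases hi : n ≤ i
  · simp [step, hi, hi.trans hij]
  · simp [step, hi]

end EventuallyConstant

section Digits

variable {b : ℕ} [NeZero b] {u v : ℕ → Fin b}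

lemma ofDigits_zero : ofDigits (0 : ℕ → Fin b) = 0 := by
  simp [ofDigits, ofDigitsTerm]

lemma eq_zero_of_ofDigits_eq_zero (hu : ofDigits u = 0) : u = 0 := by
  have hsum : HasSum (ofDigitsTerm u) 0 := hu ▸ summable_ofDigitsTerm.hasSum
  have hterm := (hasSum_zero_iff_of_nonneg fun _ => ofDigitsTerm_nonneg).1 hsum
  funext i
  simpa [ofDigitsTerm, NeZero.ne b] using congrFun hterm i

lemma eventually_eq_zero_of_ofDigits_eq {n : ℕ} (huv : ofDigits u = ofDigits v)
    (hlt : ∀ i < n, u i = v i) (hn : v n < u n) : ∀ᶠ i in atTop, u i = 0 := by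
  set tailU := ofDigits fun i => u (i + (n + 1)) with htailU
  set tailV := ofDigits fun i => v (i + (n + 1))
  have hheads : ∑ i ∈ Finset.range n, ofDigitsTerm u i = ∑ i ∈ Finset.range n, ofDigitsTerm v i :=
    Finset.sum_congr rfl fun i hi => by
      simp only [ofDigitsTerm, hlt i (Finset.mem_range.1 hi)]
  have htails : (u n : ℝ) + tailU = v n + tailV := by
    rw [ofDigits_eq_sum_add_ofDigits u (n + 1), ofDigits_eq_sum_add_ofDigits v (n + 1),
      Finset.sum_range_succ, Finset.sum_range_succ, hheads] at huv
    have hb : ((b : ℝ) ^ (n + 1))⁻¹ ≠ 0 :=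
      inv_ne_zero (pow_ne_zero _ (Nat.cast_ne_zero.2 (NeZero.ne b)))
    refine mul_left_cancel₀ hb ?_
    simp only [ofDigitsTerm] at huv
    linarith
  have hdigit : (v n : ℝ) + 1 ≤ u n := by exact_mod_cast hn
  have htailU_zero : tailU = 0 :=
    le_antisymm (by linarith [ofDigits_le_one fun i => v (i + (n + 1))]) (ofDigits_nonneg _)
  refine eventually_atTop.2 ⟨n + 1, fun i hi => ?_⟩
  simpa [Nat.sub_add_cancel hi] using
    congrFun (eq_zero_of_ofDigits_eq_zero htailU_zero) (i - (n + 1))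

lemma countable_setOf_ofDigits_eq (y : ℝ) : {u : ℕ → Fin b | ofDigits u = y}.Countable := by
  refine .of_sdiff (Subsingleton.countable ?_) (countable_setOf_eventually_atTop_eq 0)
  rintro u ⟨hu, hu'⟩ v ⟨hv, hv'⟩
  by_contra hne
  have hagree : ∀ i < PiNat.firstDiff u v, u i = v i := fun i => PiNat.apply_eq_of_lt_firstDiff
  rcases (PiNat.apply_firstDiff_ne hne).lt_or_gt with hlt | hlt
  · exact hv' (eventually_eq_zero_of_ofDigits_eq (hv.trans hu.symm)
      (fun i hi => (hagree i hi).symm) hlt)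
  · exact hu' (eventually_eq_zero_of_ofDigits_eq (hu.trans hv.symm) hagree hlt)

end Digits

section RunLength

/-- The binary sequences with infinitely many ones, a co-countable part of Cantor space that maps
continuously onto Baire space. -/
def infinitelyManyOnes : Set (ℕ → Fin 2) := {v | ∃ᶠ i in atTop, v i = 1}

/-- The number of zeros between the `n`-th and the `(n + 1)`-st one of `v`, counting from zero. The
zeros before the first one are ignored; `Nat.nth` is junk outside `infinitelyManyOnes`. -/
def runLength (v : ℕ → Fin 2) (n : ℕ) : ℕ :=
  Nat.nth (v · = 1) (n + 1) - Nat.nth (v · = 1) n - 1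

/-- The position of the `n`-th one in `ofRunLength x`. -/
def onePosition (x : ℕ → ℕ) (n : ℕ) : ℕ := ∑ i ∈ Finset.range n, (x i + 1)

/-- The binary sequence `1 0^(x 0) 1 0^(x 1) 1 …`, a right inverse of `runLength`. -/
def ofRunLength (x : ℕ → ℕ) : ℕ → Fin 2 := (range (onePosition x)).indicator 1

lemma countable_compl_infinitelyManyOnes : infinitelyManyOnesᶜ.Countable := by
  refine (countable_setOf_eventually_atTop_eq 0).mono fun v hv => ?_
  filter_upwards [not_frequently.1 hv] with i hi
  lia

lemma eventually_nhds_forall_le_eq {α : Type*} [TopologicalSpace α] [DiscreteTopology α]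
    (v : ℕ → α) (N : ℕ) : ∀ᶠ w in 𝓝 v, ∀ i ≤ N, w i = v i :=
  (eventually_all_finite (finite_Iic N)).2 fun i _ =>
    (continuous_apply i).continuousAt (isOpen_discrete {v i} |>.mem_nhds rfl)

lemma eventually_nth_eq {α : Type*} [TopologicalSpace α] [DiscreteTopology α] {v : ℕ → α} {c : α}
    (hv : ∃ᶠ i in atTop, v i = c) (n : ℕ) :
    ∀ᶠ w in 𝓝 v, Nat.nth (w · = c) n = Nat.nth (v · = c) n := by
  classical
  have hinf := Nat.frequently_atTop_iff_infinite.1 hv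
  filter_upwards [eventually_nhds_forall_le_eq v (Nat.nth (v · = c) n)] with w hw
  have hN : w (Nat.nth (v · = c) n) = c := (hw _ le_rfl).trans (Nat.nth_mem_of_infinite hinf n)
  have hcount : Nat.count (w · = c) (Nat.nth (v · = c) n) = n := by
    conv_rhs => rw [← Nat.count_nth_of_infinite hinf n]
    simp only [Nat.count_eq_card_filter_range]
    congr 1
    exact Finset.filter_congr fun i hi => by rw [hw i (Finset.mem_range.1 hi).le]
  simpa only [hcount] using Nat.nth_count (p := (w · = c)) hN

lemma continuousOn_runLength : ContinuousOn runLength infinitelyManyOnes := by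
  refine fun v hv => (continuousAt_pi.2 fun n => ?_).continuousWithinAt
  refine (continuousAt_const (y := runLength v n)).congr ?_
  filter_upwards [eventually_nth_eq hv n, eventually_nth_eq hv (n + 1)] with w hn hn₁
  simp only [runLength, hn, hn₁]

lemma strictMono_onePosition (x : ℕ → ℕ) : StrictMono (onePosition x) :=
  strictMono_nat_of_lt_succ fun n => by
    simp only [onePosition, Finset.sum_range_succ]
    lia

lemma setOf_ofRunLength_eq_one (x : ℕ → ℕ) : {i | ofRunLength x i = 1} = range (onePosition x) :=
  ext fun i => by by_cases hi : i ∈ range (onePosition x) <;> simp [ofRunLength, hi, -mem_range]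

lemma infinite_setOf_ofRunLength_eq_one (x : ℕ → ℕ) : {i | ofRunLength x i = 1}.Infinite := by
  rw [setOf_ofRunLength_eq_one]
  exact infinite_range_of_injective (strictMono_onePosition x).injective

lemma ofRunLength_mem_infinitelyManyOnes (x : ℕ → ℕ) : ofRunLength x ∈ infinitelyManyOnes :=
  Nat.frequently_atTop_iff_infinite.2 (infinite_setOf_ofRunLength_eq_one x)

lemma nth_ofRunLength (x : ℕ → ℕ) : Nat.nth (ofRunLength x · = 1) = onePosition x := by
  have hinf := infinite_setOf_ofRunLength_eq_one x
  rw [← StrictMono.range_inj (Nat.nth_strictMono hinf) (strictMono_onePosition x),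
    Nat.range_nth_of_infinite hinf, ← setOf_ofRunLength_eq_one]

lemma runLength_ofRunLength : Function.LeftInverse runLength ofRunLength := fun x => by
  funext n
  simp only [runLength, nth_ofRunLength, onePosition, Finset.sum_range_succ]
  lia

end RunLength

section ClosedGraph

lemma eq_of_mem_closure_graphOn {X Y : Type*} [TopologicalSpace X] [TopologicalSpace Y] [T2Space Y]
    {f : X → Y} {s : Set X} {x : X} {y : Y} (hf : ContinuousWithinAt f s x)
    (h : (x, y) ∈ closure (s.graphOn f)) : y = f x := by
  have := mem_closure_iff_nhdsWithin_neBot.1 h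
  have hgraph : ∀ᶠ p in 𝓝[s.graphOn f] (x, y), p.1 ∈ s ∧ f p.1 = p.2 := by
    filter_upwards [self_mem_nhdsWithin] with p hp using mem_graphOn.1 hp
  have hfst : Tendsto Prod.fst (𝓝[s.graphOn f] (x, y)) (𝓝[s] x) :=
    tendsto_nhdsWithin_iff.2
      ⟨continuousAt_fst.tendsto.mono_left nhdsWithin_le_nhds, hgraph.mono fun _ hp => hp.1⟩
  exact tendsto_nhds_unique_of_eventuallyEq
    (continuousAt_snd.tendsto.mono_left nhdsWithin_le_nhds) (hf.tendsto.comp hfst)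
    (hgraph.mono fun _ hp => hp.2.symm)

variable {Y : Type*} [TopologicalSpace Y] [T2Space Y] {A : Set Y}

lemma exists_isClosed_continuum_le_fiber (hA : MeasureTheory.AnalyticSet A) :
    ∃ E : Set ((ℕ → Fin 2) × Y), IsClosed E ∧ (∀ y ∈ A, 𝔠 ≤ #{v | (v, y) ∈ E}) ∧
      ∀ y ∉ A, {v | (v, y) ∈ E}.Countable := by
  rw [MeasureTheory.AnalyticSet] at hA
  rcases hA with rfl | ⟨f, hf, rfl⟩
  · exact ⟨∅, isClosed_empty, by simp, by simp⟩
  -- The second components of the entries of `x` are free, which makes each fibre of `φ` large.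
  let φ : (ℕ → ℕ) → Y := fun x => f fun n => (x n).unpair.1
  have hφ : Continuous φ :=
    hf.comp (continuous_pi fun n =>
      (continuous_of_discreteTopology (f := fun k : ℕ => k.unpair.1)).comp (continuous_apply n))
  have hφcont : ContinuousOn (φ ∘ runLength) infinitelyManyOnes :=
    hφ.comp_continuousOn continuousOn_runLength
  refine ⟨closure (infinitelyManyOnes.graphOn (φ ∘ runLength)), isClosed_closure, ?_, ?_⟩
  · rintro _ ⟨x, rfl⟩
    let code : (ℕ → ℕ) → ℕ → Fin 2 := fun z => ofRunLength fun n => Nat.pair (x n) (z n)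
    have hcode : Function.Injective code := fun z w h => funext fun n =>
      (Nat.pair_eq_pair.1 (congrFun (runLength_ofRunLength.injective h) n)).2
    have hmem : ∀ z, (code z, f x) ∈ closure (infinitelyManyOnes.graphOn (φ ∘ runLength)) :=
      fun z => subset_closure <| by
        simp [code, φ, ofRunLength_mem_infinitelyManyOnes, runLength_ofRunLength _]
    calc 𝔠 = #(ℕ → ℕ) := by simp
      _ = #(range code) := (mk_range_eq code hcode).symm
      _ ≤ _ := mk_le_mk_of_subset (range_subset_iff.2 hmem)
  · intro y hy
    refine countable_compl_infinitelyManyOnes.mono (subset_compl_iff_disjoint_right.2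
      (disjoint_left.2 fun v hv hvones => hy ?_))
    rw [eq_of_mem_closure_graphOn (hφcont v hvones) hv]
    exact mem_range_self _

lemma exists_isClosed_monotone_subset_fiber (hA : MeasureTheory.AnalyticSet A) :
    ∃ E : Set ((ℕ → Fin 2) × Y), IsClosed E ∧ (∀ v y, Monotone v → (v, y) ∈ E) ∧
      (∀ y ∈ A, 𝔠 ≤ #{v | (v, y) ∈ E}) ∧ ∀ y ∉ A, {v | (v, y) ∈ E}.Countable := by
  obtain ⟨E, hE, hcont, hcount⟩ := exists_isClosed_continuum_le_fiber hA
  refine ⟨E ∪ {v | Monotone v} ×ˢ Set.univ, hE.union (isClosed_monotone.prod isClosed_univ),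
    fun v y hv => Or.inr ⟨hv, trivial⟩,
    fun y hy => (hcont y hy).trans (mk_le_mk_of_subset fun v => Or.inl), fun y hy => ?_⟩
  exact ((hcount y hy).union countable_setOf_monotone).mono fun v => Or.imp_right And.left

end ClosedGraph

section CantorPairing

/-- The embedding of the square of Cantor space into `[0, 1]` that interleaves two binary sequences
and reads the result as ternary digits, with `2` in place of `1`. -/
def cantorPairing (p : (ℕ → Fin 2) × (ℕ → Fin 2)) : ℝ :=
  ofDigits fun i =>
    if Sum.elim p.1 p.2 (Equiv.natSumNatEquivNat.symm i) = 1 then (2 : Fin 3) else 0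

lemma continuous_cantorPairing : Continuous cantorPairing := by
  refine continuous_ofDigits.comp (continuous_pi fun i => ?_)
  refine (continuous_of_discreteTopology
    (f := fun d : Fin 2 => if d = 1 then (2 : Fin 3) else 0)).comp ?_
  rcases Equiv.natSumNatEquivNat.symm i with j | j
  · exact (continuous_apply j).comp continuous_fst
  · exact (continuous_apply j).comp continuous_snd

lemma injective_cantorPairing : Function.Injective cantorPairing := fun p q h => by
  have hdigits := ofDigits_zero_two_sequence_unique (by grind) (by grind) h
  have helim : Sum.elim p.1 p.2 = Sum.elim q.1 q.2 := funext fun k => by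
    have := congrFun hdigits (Equiv.natSumNatEquivNat k)
    simp only [Equiv.symm_apply_apply] at this
    grind
  exact Prod.ext (congrArg (· ∘ Sum.inl) helim) (congrArg (· ∘ Sum.inr) helim)

lemma cantorPairing_mem_Icc (p : (ℕ → Fin 2) × (ℕ → Fin 2)) : cantorPairing p ∈ Icc (0 : ℝ) 1 :=
  ⟨ofDigits_nonneg _, ofDigits_le_one _⟩

lemma cantorPairing_zero : cantorPairing 0 = 0 := by
  rw [← ofDigits_zero (b := 3)]
  refine congrArg ofDigits (funext fun i => ?_)
  rcases Equiv.natSumNatEquivNat.symm i <;> simp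

lemma cantorPairing_one : cantorPairing 1 = 1 := by
  rw [← ofDigits_const_last_eq_one 2]
  refine congrArg ofDigits (funext fun i => ?_)
  rcases Equiv.natSumNatEquivNat.symm i <;> simp

lemma exists_comp_cantorPairing_eq_ofDigits_fst :
    ∃ G : C(ℝ, ℝ), ∀ p, G (cantorPairing p) = ofDigits p.1 := by
  obtain ⟨G, hG⟩ := ContinuousMap.exists_extension'
    (continuous_cantorPairing.isClosedEmbedding injective_cantorPairing)
    ⟨fun p => ofDigits p.1, continuous_ofDigits.comp continuous_fst⟩
  exact ⟨G, congrFun hG⟩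

/-- The copy in the Cantor set of `E`, with its real coordinate replaced by all of its binary
expansions, so that the real coordinate becomes a continuous function on a subset of `[0, 1]`. -/
def cantorCopy (E : Set ((ℕ → Fin 2) × ℝ)) : Set ℝ :=
  cantorPairing '' {p | (p.2, ofDigits p.1) ∈ E}

variable {E : Set ((ℕ → Fin 2) × ℝ)} {g : ℝ → ℝ} {y : ℝ}

lemma isClosed_cantorCopy (hE : IsClosed E) : IsClosed (cantorCopy E) :=
  (continuous_cantorPairing.isClosedEmbedding injective_cantorPairing).isClosedMap _
    (hE.preimage (continuous_snd.prodMk (continuous_ofDigits.comp continuous_fst)))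

lemma cantorCopy_subset_Icc : cantorCopy E ⊆ Icc 0 1 :=
  image_subset_iff.2 fun p _ => cantorPairing_mem_Icc p

lemma mapsTo_cantorCopy (hg : ∀ p, g (cantorPairing p) = ofDigits p.1) :
    MapsTo g (cantorCopy E) (Icc 0 1) := by
  rintro _ ⟨p, -, rfl⟩
  exact hg p ▸ ⟨ofDigits_nonneg _, ofDigits_le_one _⟩

lemma mk_fiber_le_mk_cantorCopy_inter (hg : ∀ p, g (cantorPairing p) = ofDigits p.1)
    (hy : y ∈ Icc (0 : ℝ) 1) : #{v | (v, y) ∈ E} ≤ #↥(cantorCopy E ∩ g ⁻¹' {y}) := by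
  obtain ⟨u, -, rfl⟩ := ofDigits_SurjOn one_lt_two hy
  refine mk_le_of_injective
    (f := fun v => ⟨cantorPairing (u, v), mem_image_of_mem _ v.2, hg (u, v)⟩) fun v w h => ?_
  exact Subtype.ext (congrArg Prod.snd (injective_cantorPairing (congrArg Subtype.val h)))

lemma countable_cantorCopy_inter (hg : ∀ p, g (cantorPairing p) = ofDigits p.1)
    (hy : {v | (v, y) ∈ E}.Countable) : (cantorCopy E ∩ g ⁻¹' {y}).Countable := by
  refine (((countable_setOf_ofDigits_eq y).prod hy).image cantorPairing).mono ?_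
  rintro _ ⟨⟨p, hp, rfl⟩, hpy⟩
  obtain rfl : ofDigits p.1 = y := (hg p).symm.trans hpy
  exact mem_image_of_mem _ ⟨rfl, hp⟩

end CantorPairing

theorem analytic_set_of_continuum_sections (A : Set ℝ)
    (hA : A ⊆ Set.Icc 0 1) (hAan : MeasureTheory.AnalyticSet A) :
    ∃ F : ℝ → ℝ, ContinuousOn F (Set.Icc 0 1) ∧
      Set.MapsTo F (Set.Icc 0 1) (Set.Icc 0 1) ∧ F 0 = 0 ∧ F 1 = 1 ∧
      (∀ y ∈ A, #(Sec F y) = Cardinal.continuum) ∧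
      (∀ y ∈ Set.Icc (0:ℝ) 1 \ A, (Sec F y).Countable ∧ (Sec F y).Infinite) := by
  obtain ⟨E, hE, hmono, hcontinuum, hcountable⟩ := exists_isClosed_monotone_subset_fiber hAan
  obtain ⟨G, hG⟩ := exists_comp_cantorPairing_eq_ofDigits_fst
  have hK := isClosed_cantorCopy hE
  have h₀ : 0 ∈ cantorCopy E := ⟨0, hmono _ _ monotone_const, cantorPairing_zero⟩
  have h₁ : 1 ∈ cantorCopy E := ⟨1, hmono _ _ monotone_const, cantorPairing_one⟩
  have hGK := mapsTo_cantorCopy (E := E) hG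
  have hfiber {y : ℝ} (hy : y ∈ Icc 0 1) :
      #{v | (v, y) ∈ E} ≤ #(Sec (gapExtension (cantorCopy E) G) y) :=
    (mk_fiber_le_mk_cantorCopy_inter hG hy).trans
      (mk_le_mk_of_subset (inter_preimage_subset_Sec_gapExtension cantorCopy_subset_Icc))
  refine ⟨gapExtension (cantorCopy E) G,
    continuousOn_gapExtension hK h₀ h₁ G.continuous.continuousOn hGK,
    mapsTo_gapExtension hK h₀ h₁ hGK, ?_, ?_, fun y hy => ?_, fun y ⟨hy, hyA⟩ => ⟨?_, ?_⟩⟩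
  · simpa [gapExtension_of_mem h₀, cantorPairing_zero, ofDigits_zero] using hG 0
  · simpa [gapExtension_of_mem h₁, cantorPairing_one] using
      (hG 1).trans (ofDigits_const_last_eq_one 1)
  · exact ((mk_set_le _).trans mk_real.le).antisymm ((hcontinuum y hy).trans (hfiber (hA hy)))
  · exact countable_Sec_gapExtension hK h₀ h₁ (countable_cantorCopy_inter hG (hcountable y hyA))
  · have hinf : {v | (v, y) ∈ E}.Infinite := infinite_setOf_monotone.mono fun v => hmono v y
    exact infinite_coe_iff.1 (infinite_iff.2 ((infinite_iff.1 hinf.to_subtype).trans (hfiber hy)))
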